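/- Let X be a Banach space (with the metric induced by its norm) and Λ a compact metric space, and let w : Λ × X → X be a weakly* hyperbolic IFS. Then the Hutchinson–Barnsley operator F has a global attractor: there exists a nonempty compact set K ⊆ X with F(K) = K such that Fⁿ(B) → K in the Hausdorff metric for every nonempty compact B ⊆ X. -/

import Mathlib

open Metric Set Filter Topology

/-- `seqComp w σ n = w_{σ₁} ∘ ⋯ ∘ w_{σₙ}` (with `σ i` denoting `σ_{i+1}`). -/
def seqComp {Λ X : Type*} (w : Λ → X → X) (σ : ℕ → Λ) : ℕ → X → X
  | 0 => id
  | n + 1 => seqComp w σ n ∘ w (σ n)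

/-- The Hutchinson–Barnsley operator on sets: `F(A) = w(Λ × A)`. -/
def HBset {Λ X : Type*} (w : Λ → X → X) (A : Set X) : Set X :=
  (fun p : Λ × X => w p.1 p.2) '' (Set.univ ×ˢ A)

/-!
Weak* hyperbolicity of `w` passes to the Hutchinson–Barnsley operator `F` on the space of nonempty
compact sets: high iterates of `F` bring any two sets at Hausdorff distance less than `η`
uniformly close. The hyperspace is connected because `X` is, so the equivalence relation
`dist (F^[n] A) (F^[n] B) → 0`, whose classes are open, relates all `A` and `B`. Hence far along an
orbit any fixed number of steps moves the point very little, and the contraction then keeps the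
remaining orbit inside one ball of radius `η`, on which the iterates of `F` contract uniformly; so
the orbit is Cauchy, and its limit attracts everything.
-/

open TopologicalSpace (NonemptyCompacts)

section SelfMap

variable {Y : Type*}

/-- The analogue for a self-map of weak* hyperbolicity of an iterated function system, with the
scale `η` fixed. -/
def IteratesContractBelow [PseudoMetricSpace Y] (F : Y → Y) (η : ℝ) : Prop :=
  ∀ ε > 0, ∃ n₀ : ℕ, ∀ n ≥ n₀, ∀ x y, dist x y < η → dist (F^[n] x) (F^[n] y) < ε

namespace IteratesContractBelow

section PseudoMetric

variable [PseudoMetricSpace Y] {F : Y → Y} {η : ℝ}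

theorem tendsto_dist_iterate_of_dist_lt (hF : IteratesContractBelow F η) {x y : Y}
    (hxy : dist x y < η) : Tendsto (fun n => dist (F^[n] x) (F^[n] y)) atTop (𝓝 0) := by
  refine Metric.tendsto_atTop.2 fun ε hε => ?_
  obtain ⟨n₀, hn₀⟩ := hF ε hε
  exact ⟨n₀, fun n hn => by simpa using hn₀ n hn x y hxy⟩

theorem tendsto_dist_iterate [PreconnectedSpace Y] (hF : IteratesContractBelow F η) (hη : 0 < η)
    (x y : Y) : Tendsto (fun n => dist (F^[n] x) (F^[n] y)) atTop (𝓝 0) := by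
  let Asymptotic : Y → Y → Prop := fun x y =>
    Tendsto (fun n => dist (F^[n] x) (F^[n] y)) atTop (𝓝 0)
  have symmetric : Std.Symm Asymptotic :=
    ⟨fun _ _ hxy => by simpa only [Asymptotic, dist_comm] using hxy⟩
  have transitive : IsTrans Y Asymptotic := ⟨fun _ _ _ hxy hyz =>
    squeeze_zero (fun _ => dist_nonneg) (fun _ => dist_triangle _ _ _)
      (by simpa only [add_zero] using hxy.add hyz)⟩
  have locally_related : ∀ x, ∀ᶠ y in 𝓝 x, Asymptotic x y := fun x => by
    filter_upwards [ball_mem_nhds x hη] with y hy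
    exact hF.tendsto_dist_iterate_of_dist_lt (mem_ball'.1 hy)
  exact PreconnectedSpace.induction₂ Asymptotic locally_related transitive x y

theorem exists_forall_dist_iterate_self_lt [ConnectedSpace Y] (hF : IteratesContractBelow F η)
    (hη : 0 < η) : ∃ x, ∀ m, dist (F^[m] x) x < η := by
  obtain ⟨y⟩ := ‹ConnectedSpace Y›.toNonempty
  obtain ⟨N, hN⟩ := hF (η / 2) (half_pos hη)
  have eventually_near :
      ∀ᶠ k in atTop, ∀ r ≤ N + 1, dist (F^[k] (F^[r] y)) (F^[k] y) < η / 2 :=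
    (finite_Iic (N + 1)).eventually_all.2 fun r _ =>
      (hF.tendsto_dist_iterate hη (F^[r] y) y).eventually_lt_const (half_pos hη)
  obtain ⟨k, hk⟩ := eventually_near.exists
  have initial_near : ∀ r ≤ N + 1, dist (F^[r] (F^[k] y)) (F^[k] y) < η / 2 := fun r hr => by
    rw [← Function.iterate_add_apply, add_comm r k, Function.iterate_add_apply]
    exact hk r hr
  refine ⟨F^[k] y, fun m => ?_⟩
  induction m using Nat.strong_induction_on with
  | _ m ih =>
    rcases le_or_gt m N with hm | hm
    · exact (initial_near m (by lia)).trans (half_lt_self hη)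
    · obtain ⟨j, rfl⟩ := Nat.exists_eq_add_of_le (Nat.succ_le_of_lt hm)
      rw [Function.iterate_add_apply]
      calc dist (F^[N + 1] (F^[j] (F^[k] y))) (F^[k] y)
          ≤ dist (F^[N + 1] (F^[j] (F^[k] y))) (F^[N + 1] (F^[k] y))
            + dist (F^[N + 1] (F^[k] y)) (F^[k] y) := dist_triangle _ _ _
        _ < η / 2 + η / 2 :=
          add_lt_add (hN (N + 1) N.le_succ _ _ (ih j (by lia))) (initial_near (N + 1) le_rfl)
        _ = η := add_halves η

theorem cauchySeq_iterate (hF : IteratesContractBelow F η) {x : Y}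
    (hx : ∀ m, dist (F^[m] x) x < η) : CauchySeq fun n => F^[n] x := by
  refine Metric.cauchySeq_iff'.2 fun ε hε => ?_
  obtain ⟨N, hN⟩ := hF ε hε
  refine ⟨N, fun n hn => ?_⟩
  obtain ⟨m, rfl⟩ := Nat.exists_eq_add_of_le hn
  simpa only [Function.iterate_add_apply] using hN N le_rfl _ _ (hx m)

end PseudoMetric

theorem exists_isFixedPt_tendsto_iterate [MetricSpace Y] [CompleteSpace Y] [ConnectedSpace Y]
    {F : Y → Y} {η : ℝ} (hF : IteratesContractBelow F η) (hη : 0 < η) (hcont : Continuous F) :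
    ∃ K, Function.IsFixedPt F K ∧ ∀ y, Tendsto (fun n => F^[n] y) atTop (𝓝 K) := by
  obtain ⟨x, hx⟩ := hF.exists_forall_dist_iterate_self_lt hη
  obtain ⟨K, hK⟩ := cauchySeq_tendsto_of_complete (hF.cauchySeq_iterate hx)
  exact ⟨K, isFixedPt_of_tendsto_iterate hK hcont.continuousAt, fun y =>
    hK.congr_dist (hF.tendsto_dist_iterate hη x y)⟩

end IteratesContractBelow

end SelfMap

section IteratedFunctionSystem

variable {Λ X : Type*} {w : Λ → X → X}

theorem mem_HBset {A : Set X} {z : X} : z ∈ HBset w A ↔ ∃ l, ∃ x ∈ A, w l x = z := by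
  simp [HBset]

theorem seqComp_congr {σ τ : ℕ → Λ} {n : ℕ} (h : ∀ i < n, σ i = τ i) :
    seqComp w σ n = seqComp w τ n := by
  induction n with
  | zero => rfl
  | succ n ih => rw [seqComp, seqComp, ih fun i hi => h i (by lia), h n n.lt_succ_self]

theorem mem_HBset_iterate [Nonempty Λ] {n : ℕ} {A : Set X} {z : X} :
    z ∈ (HBset w)^[n] A ↔ ∃ σ : ℕ → Λ, ∃ x ∈ A, seqComp w σ n x = z := by
  induction n generalizing A with
  | zero => simp [seqComp]
  | succ n ih =>
    rw [Function.iterate_succ_apply, ih]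
    constructor
    · rintro ⟨σ, _, hy, rfl⟩
      obtain ⟨l, x, hx, rfl⟩ := mem_HBset.1 hy
      have agree : seqComp w (Function.update σ n l) n = seqComp w σ n :=
        seqComp_congr fun i hi => Function.update_of_ne hi.ne _ _
      exact ⟨Function.update σ n l, x, hx, by simp [seqComp, agree]⟩
    · rintro ⟨σ, x, hx, rfl⟩
      exact ⟨σ, w (σ n) x, mem_HBset.2 ⟨σ n, x, hx, rfl⟩, rfl⟩

theorem hausdorffDist_HBset_iterate_le [Nonempty Λ] [PseudoMetricSpace X] {η ε : ℝ} {n : ℕ}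
    {A B : Set X} (hε : 0 ≤ ε)
    (hw : ∀ (σ : ℕ → Λ) x y, dist x y < η → dist (seqComp w σ n x) (seqComp w σ n y) ≤ ε)
    (hAB : hausdorffDist A B < η) (hfin : hausdorffEDist A B ≠ ⊤) :
    hausdorffDist ((HBset w)^[n] A) ((HBset w)^[n] B) ≤ ε := by
  refine hausdorffDist_le_of_mem_dist hε (fun z hz => ?_) (fun z hz => ?_) <;>
    obtain ⟨σ, x, hx, rfl⟩ := mem_HBset_iterate.1 hz
  · obtain ⟨y, hy, hxy⟩ := exists_dist_lt_of_hausdorffDist_lt hx hAB hfin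
    exact ⟨_, mem_HBset_iterate.2 ⟨σ, y, hy, rfl⟩, hw σ x y hxy⟩
  · obtain ⟨y, hy, hyx⟩ := exists_dist_lt_of_hausdorffDist_lt' hx hAB hfin
    exact ⟨_, mem_HBset_iterate.2 ⟨σ, y, hy, rfl⟩, by simpa only [dist_comm] using hw σ y x hyx⟩

variable [TopologicalSpace Λ] [CompactSpace Λ] [Nonempty Λ]

section Topological

variable [TopologicalSpace X]

/-- The Hutchinson–Barnsley operator of a continuous iterated function system, as a self-map of the
space of nonempty compact sets. -/
def hutchinson (hw : Continuous fun p : Λ × X => w p.1 p.2) (A : NonemptyCompacts X) :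
    NonemptyCompacts X :=
  ((⊤ : NonemptyCompacts Λ) ×ˢ A).map _ hw

theorem coe_hutchinson (hw : Continuous fun p : Λ × X => w p.1 p.2) (A : NonemptyCompacts X) :
    (hutchinson hw A : Set X) = HBset w A := rfl

theorem coe_hutchinson_iterate (hw : Continuous fun p : Λ × X => w p.1 p.2) (n : ℕ)
    (A : NonemptyCompacts X) : (((hutchinson hw)^[n] A : NonemptyCompacts X) : Set X) =
      (HBset w)^[n] A :=
  Function.Semiconj.iterate_right (coe_hutchinson hw) n A

theorem continuous_hutchinson (hw : Continuous fun p : Λ × X => w p.1 p.2) :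
    Continuous (hutchinson hw) :=
  hw.nonemptyCompacts_map.comp
    (NonemptyCompacts.continuous_prod.comp (continuous_const.prodMk continuous_id))

end Topological

theorem iteratesContractBelow_hutchinson [MetricSpace X] {η : ℝ}
    (hw : Continuous fun p : Λ × X => w p.1 p.2)
    (hyp : ∀ ε > (0 : ℝ), ∃ n₀ : ℕ, ∀ n ≥ n₀, ∀ σ : ℕ → Λ, ∀ x y : X,
      dist x y < η → dist (seqComp w σ n x) (seqComp w σ n y) < ε) :
    IteratesContractBelow (hutchinson hw) η := by
  intro ε hε
  obtain ⟨n₀, hn₀⟩ := hyp (ε / 2) (half_pos hε)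
  refine ⟨n₀, fun n hn A B hAB => lt_of_le_of_lt ?_ (half_lt_self hε)⟩
  rw [NonemptyCompacts.dist_eq, coe_hutchinson_iterate, coe_hutchinson_iterate]
  exact hausdorffDist_HBset_iterate_le (half_pos hε).le
    (fun σ x y hxy => (hn₀ n hn σ x y hxy).le) hAB
    (hausdorffEDist_ne_top_of_nonempty_of_bounded A.nonempty B.nonempty
      A.isCompact.isBounded B.isCompact.isBounded)

end IteratedFunctionSystem

theorem stmt_15_general {Λ X : Type*} [TopologicalSpace Λ] [CompactSpace Λ] [Nonempty Λ]
    [MetricSpace X] [CompleteSpace X] [ConnectedSpace X]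
    (w : Λ → X → X) (hw : Continuous fun p : Λ × X => w p.1 p.2)
    (hyp : ∃ η > (0 : ℝ), ∀ ε > (0 : ℝ), ∃ n₀ : ℕ, ∀ n ≥ n₀, ∀ σ : ℕ → Λ, ∀ x y : X,
      dist x y < η → dist (seqComp w σ n x) (seqComp w σ n y) < ε) :
    ∃ K : Set X, K.Nonempty ∧ IsCompact K ∧ HBset w K = K ∧
      ∀ B : Set X, B.Nonempty → IsCompact B →
        Tendsto (fun n => hausdorffDist ((HBset w)^[n] B) K) atTop (𝓝 0) := by
  obtain ⟨η, hη, hyp⟩ := hyp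
  obtain ⟨K, hK, attracts⟩ := (iteratesContractBelow_hutchinson hw hyp)
    |>.exists_isFixedPt_tendsto_iterate hη (continuous_hutchinson hw)
  have invariant : HBset w K = (K : Set X) := by rw [← coe_hutchinson hw, hK.eq]
  refine ⟨K, K.nonempty, K.isCompact, invariant, fun B hB hBc => ?_⟩
  simpa only [NonemptyCompacts.dist_eq, coe_hutchinson_iterate, NonemptyCompacts.coe_mk,
    TopologicalSpace.Compacts.coe_mk] using
    tendsto_iff_dist_tendsto_zero.1 (attracts ⟨⟨B, hBc⟩, hB⟩)

/-- A weakly* hyperbolic IFS on a Banach space has a global attractor which is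
a compact invariant set. -/
theorem stmt_15 {Λ X : Type*} [MetricSpace Λ] [CompactSpace Λ] [Nonempty Λ]
    [NormedAddCommGroup X] [NormedSpace ℝ X] [CompleteSpace X]
    (w : Λ → X → X) (hw : Continuous fun p : Λ × X => w p.1 p.2)
    (hyp : ∃ η > (0 : ℝ), ∀ ε > (0 : ℝ), ∃ n₀ : ℕ, ∀ n ≥ n₀, ∀ σ : ℕ → Λ, ∀ x y : X,
      dist x y < η → dist (seqComp w σ n x) (seqComp w σ n y) < ε) :
    ∃ K : Set X, K.Nonempty ∧ IsCompact K ∧ HBset w K = K ∧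
      ∀ B : Set X, B.Nonempty → IsCompact B →
        Tendsto (fun n => hausdorffDist ((HBset w)^[n] B) K) atTop (𝓝 0) :=
  stmt_15_general w hw hyp
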